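/- arXiv:1310.5169 — 7 statements merged into one kernel-verified Lean document; each statement's English description precedes it below -/
import Mathlib

section
/- Linear coupling strength autonomy theorem (Theorem 1): Under the autoregressive model hypotheses, the residuals X_U and Y_U of X and Y after regression on U satisfy: (i) ⟪Y_U, X_U⟫ = c·σX² − c·eᵀ·S_Z⁻¹·e; (ii) ‖Y_U‖² = σY² + c²·σX² − c²·eᵀ·S_Z⁻¹·e; (iii) ‖X_U‖² = σX² − eᵀ·S_Z⁻¹·e. -/
/-!
The residual of `X` on `U` is the only vector orthogonal to every `U i` that differs from `X` by a
linear combination of the `U i` (`regResidual_eq_of_orthogonal`). With `w = S_Z⁻¹ e` and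
`z = -G(Z,Z)⁻¹ G(Z,W) w`, the vector `P = ∑ wᵢ Wᵢ + ∑ zᵢ Zᵢ` has the same inner products with all
`Wᵢ` and `Zᵢ` as `εX`, namely `e` and `0`, so it is the projection of `εX` onto the span of `U`.
Hence `X_U = R` and `Y_U = c R + εY`, where `R = εX - P`. The formulas follow from `R ⟂ εY` and
`‖R‖² = ⟪R, εX⟫ = ‖εX‖² - e ⬝ S_Z⁻¹ e`.
-/

open Matrix
open scoped RealInnerProductSpace

/-- Gram matrix `G(U,V)_{ij} = ⟪U_i, V_j⟫` of two finite families in a real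
inner product space. -/
noncomputable def gram {H : Type*} [NormedAddCommGroup H] [InnerProductSpace ℝ H]
    {m n : ℕ} (U : Fin m → H) (V : Fin n → H) : Matrix (Fin m) (Fin n) ℝ :=
  fun i j => ⟪U i, V j⟫

/-- The vector `⟪U,X⟫` with entries `⟪U_i, X⟫`. -/
noncomputable def gramVec {H : Type*} [NormedAddCommGroup H] [InnerProductSpace ℝ H]
    {m : ℕ} (U : Fin m → H) (X : H) : Fin m → ℝ :=
  fun i => ⟪U i, X⟫

/-- The regression regResidual `X_U = X − Σ_i (G(U,U)⁻¹ ⟪U,X⟫)_i • U_i`. -/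
noncomputable def regResidual {H : Type*} [NormedAddCommGroup H] [InnerProductSpace ℝ H]
    {m : ℕ} (U : Fin m → H) (X : H) : H :=
  X - ∑ i, ((gram U U)⁻¹ *ᵥ gramVec U X) i • U i

section Helpers

variable {H : Type*} [NormedAddCommGroup H] [InnerProductSpace ℝ H]

lemma inner_sum_smul_eq_gram_mulVec {m n : ℕ} (U : Fin m → H) (V : Fin n → H)
    (a : Fin n → ℝ) (j : Fin m) : ⟪U j, ∑ i, a i • V i⟫ = (gram U V *ᵥ a) j := by
  simp [_root_.gram, Matrix.mulVec, dotProduct, inner_sum, inner_smul_right, mul_comm]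

lemma regResidual_eq_of_orthogonal {m : ℕ} (U : Fin m → H) (hU : IsUnit (gram U U).det)
    (X R : H) (a : Fin m → ℝ) (hX : X = (∑ i, a i • U i) + R) (hR : ∀ j, ⟪U j, R⟫ = 0) :
    regResidual U X = R := by
  have h : gramVec U X = gram U U *ᵥ a := by
    ext j
    rw [gramVec, hX, inner_add_right, hR, inner_sum_smul_eq_gram_mulVec, add_zero]
  rw [regResidual, h, Matrix.mulVec_mulVec, Matrix.nonsing_inv_mul _ hU, Matrix.one_mulVec, hX]
  abel

lemma regResidual_append_eq_of_orthogonal {p q : ℕ} (W : Fin q → H) (Z : Fin p → H)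
    (hU : IsUnit (gram (Fin.append W Z) (Fin.append W Z)).det)
    (X R : H) (a : Fin q → ℝ) (b : Fin p → ℝ)
    (hX : X = (∑ i, a i • W i) + (∑ i, b i • Z i) + R)
    (hW : ∀ j, ⟪W j, R⟫ = 0) (hZ : ∀ j, ⟪Z j, R⟫ = 0) :
    regResidual (Fin.append W Z) X = R := by
  refine regResidual_eq_of_orthogonal _ hU X R (Fin.append a b) ?_ ?_
  · simpa [Fin.sum_univ_add] using hX
  · intro j
    refine Fin.addCases (fun i => ?_) (fun i => ?_) j
    · simpa using hW i
    · simpa using hZ i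

lemma isUnit_det_gram_right {p q : ℕ} (W : Fin q → H) (Z : Fin p → H)
    (hU : (gram (Fin.append W Z) (Fin.append W Z)).PosDef) : IsUnit (gram Z Z).det := by
  have h := hU.submatrix (Fin.natAdd_injective p q)
  have h2 : (gram (Fin.append W Z) (Fin.append W Z)).submatrix (Fin.natAdd q) (Fin.natAdd q)
      = gram Z Z := by
    ext i j
    simp [_root_.gram]
  rw [h2] at h
  exact h.det_pos.ne'.isUnit

/-- The Schur complement of the Gram matrix records the inner products of `W` with the vector
`∑ wᵢ Wᵢ - ∑ (G(Z,Z)⁻¹ G(Z,W) w)ᵢ Zᵢ`, which is the residual of `∑ wᵢ Wᵢ` on `Z`. -/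
lemma inner_schur_residual {p q : ℕ} (W : Fin q → H) (Z : Fin p → H)
    (hZ : IsUnit (gram Z Z).det) (w : Fin q → ℝ) :
    (∀ j, ⟪W j, (∑ i, w i • W i) +
        ∑ i, (-((gram Z Z)⁻¹ *ᵥ (gram Z W *ᵥ w))) i • Z i⟫ =
      ((gram W W - gram W Z * (gram Z Z)⁻¹ * gram Z W) *ᵥ w) j) ∧
    (∀ j, ⟪Z j, (∑ i, w i • W i) +
        ∑ i, (-((gram Z Z)⁻¹ *ᵥ (gram Z W *ᵥ w))) i • Z i⟫ = 0) := by
  constructor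
  · intro j
    rw [inner_add_right, inner_sum_smul_eq_gram_mulVec, inner_sum_smul_eq_gram_mulVec,
      Matrix.mulVec_neg, Matrix.sub_mulVec, Matrix.mulVec_mulVec, Matrix.mulVec_mulVec,
      Matrix.mul_assoc, Pi.neg_apply, Pi.sub_apply, sub_eq_add_neg]
  · intro j
    rw [inner_add_right, inner_sum_smul_eq_gram_mulVec, inner_sum_smul_eq_gram_mulVec,
      Matrix.mulVec_neg, Matrix.mulVec_mulVec, Matrix.mul_nonsing_inv _ hZ, Matrix.one_mulVec,
      Pi.neg_apply, add_neg_cancel]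

lemma isUnit_det_schur {p q : ℕ} (W : Fin q → H) (Z : Fin p → H)
    (hU : (gram (Fin.append W Z) (Fin.append W Z)).PosDef) :
    IsUnit (gram W W - gram W Z * (gram Z Z)⁻¹ * gram Z W).det := by
  have hZ := isUnit_det_gram_right W Z hU
  rw [isUnit_iff_ne_zero]
  intro h0
  obtain ⟨w, hw, hw0⟩ := Matrix.exists_mulVec_eq_zero_iff.mpr h0
  obtain ⟨h1, h2⟩ := inner_schur_residual W Z hZ w
  -- A kernel vector `w` of the Schur complement extends to a kernel vector of `G(U,U)`.
  have h3 : gram (Fin.append W Z) (Fin.append W Z) *ᵥ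
      Fin.append w (-((gram Z Z)⁻¹ *ᵥ (gram Z W *ᵥ w))) = 0 := by
    ext j
    rw [← inner_sum_smul_eq_gram_mulVec, Fin.sum_univ_add]
    simp only [Fin.append_left, Fin.append_right]
    refine Fin.addCases (fun i => ?_) (fun i => ?_) j
    · rw [Fin.append_left, h1, hw0]
      rfl
    · rw [Fin.append_right, h2]
      rfl
  have h4 := Matrix.eq_zero_of_mulVec_eq_zero hU.det_pos.ne' h3
  apply hw
  ext i
  simpa using congrFun h4 (Fin.castAdd p i)

end Helpers

/-- **Linear coupling strength autonomy theorem (Theorem 1).**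
Under the autoregressive model hypotheses, with `U` the concatenation of the
parents `W` of `Y` and the parents `Z` of `X`, `S_Z` the Schur complement and
`e_i = ⟪W_i, εX⟫` the "sidepath" covariances, the residuals of `X` and `Y`
after regression on `U` satisfy the stated (co-)variance formulas. -/
theorem linear_coupling_strength_autonomy
    {H : Type*} [NormedAddCommGroup H] [InnerProductSpace ℝ H]
    {p q : ℕ} (Z : Fin p → H) (W : Fin q → H)
    (A : Fin p → ℝ) (B : Fin q → ℝ) (c : ℝ) (εX εY X Y : H)
    (hX : X = (∑ i, A i • Z i) + εX)
    (hY : Y = c • X + (∑ i, B i • W i) + εY)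
    (hεXZ : ∀ i, ⟪εX, Z i⟫ = 0)
    (hεYW : ∀ i, ⟪εY, W i⟫ = 0)
    (hεYZ : ∀ i, ⟪εY, Z i⟫ = 0)
    (hεYX : ⟪εY, εX⟫ = 0)
    (e : Fin q → ℝ) (he : e = fun i => ⟪W i, εX⟫)
    (U : Fin (q + p) → H) (hU : U = Fin.append W Z)
    (hGram : (gram U U).PosDef)
    (SZ : Matrix (Fin q) (Fin q) ℝ)
    (hSZ : SZ = gram W W - gram W Z * (gram Z Z)⁻¹ * gram Z W) :
    ⟪regResidual U Y, regResidual U X⟫ = c * ‖εX‖ ^ 2 - c * (e ⬝ᵥ (SZ⁻¹ *ᵥ e)) ∧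
    ‖regResidual U Y‖ ^ 2 = ‖εY‖ ^ 2 + c ^ 2 * ‖εX‖ ^ 2 - c ^ 2 * (e ⬝ᵥ (SZ⁻¹ *ᵥ e)) ∧
    ‖regResidual U X‖ ^ 2 = ‖εX‖ ^ 2 - (e ⬝ᵥ (SZ⁻¹ *ᵥ e)) := by
  subst hU hSZ
  have hUu : IsUnit (gram (Fin.append W Z) (Fin.append W Z)).det := hGram.det_pos.ne'.isUnit
  have hZu := isUnit_det_gram_right W Z hGram
  have hSu := isUnit_det_schur W Z hGram
  set SZ := gram W W - gram W Z * (gram Z Z)⁻¹ * gram Z W with hSZ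
  set w := SZ⁻¹ *ᵥ e with hw
  set z := -((gram Z Z)⁻¹ *ᵥ (gram Z W *ᵥ w)) with hz
  obtain ⟨h1, h2⟩ := inner_schur_residual W Z hZu w
  rw [← hSZ, ← hz] at h1
  rw [← hz] at h2
  have hSw : SZ *ᵥ w = e := by
    rw [hw, Matrix.mulVec_mulVec, Matrix.mul_nonsing_inv _ hSu, Matrix.one_mulVec]
  rw [hSw] at h1
  set P := (∑ i, w i • W i) + ∑ i, z i • Z i with hP
  have hWR : ∀ j, ⟪W j, εX - P⟫ = 0 := by
    intro j
    rw [inner_sub_right, h1, he, sub_self]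
  have hZR : ∀ j, ⟪Z j, εX - P⟫ = 0 := by
    intro j
    rw [inner_sub_right, h2, real_inner_comm, hεXZ, sub_zero]
  have hXU : regResidual (Fin.append W Z) X = εX - P := by
    refine regResidual_append_eq_of_orthogonal W Z hUu X _ w (A + z) ?_ hWR hZR
    simp only [hX, hP, Pi.add_apply, add_smul, Finset.sum_add_distrib]
    abel
  have hYU : regResidual (Fin.append W Z) Y = c • (εX - P) + εY := by
    refine regResidual_append_eq_of_orthogonal W Z hUu Y _ (c • w + B) (c • (A + z)) ?_ ?_ ?_
    · simp only [hY, hX, hP, Pi.add_apply, Pi.smul_apply, smul_eq_mul, add_smul, mul_smul,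
        Finset.sum_add_distrib, smul_add, smul_sub, Finset.smul_sum, mul_add]
      abel
    · intro j
      rw [inner_add_right, inner_smul_right, hWR, real_inner_comm, hεYW, mul_zero, add_zero]
    · intro j
      rw [inner_add_right, inner_smul_right, hZR, real_inner_comm, hεYZ, mul_zero, add_zero]
  have hPR : ⟪P, εX - P⟫ = 0 := by
    generalize εX - P = R at hWR hZR ⊢
    simp [hP, inner_add_left, sum_inner, inner_smul_left, hWR, hZR]
  have hεYP : ⟪εY, εX - P⟫ = 0 := by
    simp [hP, inner_sub_right, inner_add_right, inner_sum, inner_smul_right, hεYW, hεYZ, hεYX]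
  have hPε : ⟪P, εX⟫ = e ⬝ᵥ w := by
    have hZε : ∀ i, ⟪Z i, εX⟫ = 0 := fun i => by rw [real_inner_comm, hεXZ]
    simp [hP, he, inner_add_left, sum_inner, inner_smul_left, hZε, dotProduct, mul_comm]
  have hRR : ⟪εX - P, εX - P⟫ = ‖εX‖ ^ 2 - e ⬝ᵥ w := by
    rw [inner_sub_left, hPR, inner_sub_right, real_inner_self_eq_norm_sq, real_inner_comm, hPε,
      sub_zero]
  rw [hXU, hYU]
  refine ⟨?_, ?_, ?_⟩
  · rw [inner_add_left, real_inner_smul_left, hRR, hεYP]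
    ring
  · rw [← real_inner_self_eq_norm_sq, inner_add_left, inner_add_right, inner_add_right,
      real_inner_smul_left, real_inner_smul_left, real_inner_smul_right, real_inner_smul_right,
      hRR, real_inner_comm εY, hεYP, real_inner_self_eq_norm_sq]
    ring
  · rw [← real_inner_self_eq_norm_sq, hRR]
end

section
/- No-sidepath formula for MIT: Under the autoregressive model hypotheses, assume additionally that e = 0 (i.e., ⟪W_i, εX⟫ = 0 for all i, 'no sidepaths') and that σX > 0 and σY > 0. Then the partial correlation of X at the coupling lag and Y given U equals ρ(X;Y|U) = c·σX / √(σY² + c²·σX²). -/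
/-!
If `ε` is orthogonal to every `U i`, then the residual on `U` of `∑ i, a i • U i + ε` is `ε`:
the normal equations have right-hand side `G(U,U) a`, so the regression coefficients are `a`
(`regResidual_sum_add`). Without sidepaths both `εX` and `εY` are orthogonal to `W` and `Z`, so
this gives `X_U = εX` and `Y_U = c • εX + εY`. Since `εX ⟂ εY`, the partial correlation is
`c σX² / (√(σY² + c² σX²) σX)`.
-/

open Matrix
open scoped RealInnerProductSpace

/-- The partial correlation `ρ(X;Y|U) = ⟪Y_U, X_U⟫ / (‖Y_U‖·‖X_U‖)`. -/
noncomputable def parCorr {H : Type*} [NormedAddCommGroup H] [InnerProductSpace ℝ H]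
    {m : ℕ} (U : Fin m → H) (X Y : H) : ℝ :=
  ⟪regResidual U Y, regResidual U X⟫ / (‖regResidual U Y‖ * ‖regResidual U X‖)

theorem regResidual_sum_add
    {H : Type*} [NormedAddCommGroup H] [InnerProductSpace ℝ H]
    {m : ℕ} (U : Fin m → H) (hG : (gram U U).PosDef) (a : Fin m → ℝ) (ε : H)
    (hε : ∀ i, ⟪U i, ε⟫ = 0) :
    regResidual U ((∑ i, a i • U i) + ε) = ε := by
  have hv : gramVec U ((∑ i, a i • U i) + ε) = gram U U *ᵥ a := by
    funext i
    simp [gramVec, _root_.gram, Matrix.mulVec, dotProduct, inner_add_right, inner_sum,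
      inner_smul_right, hε, mul_comm]
  have hdet : IsUnit (gram U U).det := hG.det_pos.ne'.isUnit
  rw [regResidual, hv, Matrix.mulVec_mulVec, Matrix.nonsing_inv_mul _ hdet, Matrix.one_mulVec]
  abel

/-- **No-sidepath formula for MIT.** Under the autoregressive model hypotheses
with no sidepaths (`⟪W_i, εX⟫ = 0` for all `i`) and `σX, σY > 0`, the partial
correlation of `X` and `Y` given `U` equals `c·σX / √(σY² + c²·σX²)`. -/
theorem mit_no_sidepath_formula
    {H : Type*} [NormedAddCommGroup H] [InnerProductSpace ℝ H]
    {p q : ℕ} (Z : Fin p → H) (W : Fin q → H)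
    (A : Fin p → ℝ) (B : Fin q → ℝ) (c : ℝ) (εX εY X Y : H)
    (hX : X = (∑ i, A i • Z i) + εX)
    (hY : Y = c • X + (∑ i, B i • W i) + εY)
    (hεXZ : ∀ i, ⟪εX, Z i⟫ = 0)
    (hεYW : ∀ i, ⟪εY, W i⟫ = 0)
    (hεYZ : ∀ i, ⟪εY, Z i⟫ = 0)
    (hεYX : ⟪εY, εX⟫ = 0)
    (hNoSidepath : ∀ i, ⟪W i, εX⟫ = 0)
    (hσX : 0 < ‖εX‖) (hσY : 0 < ‖εY‖)
    (U : Fin (q + p) → H) (hU : U = Fin.append W Z)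
    (hGram : (gram U U).PosDef) :
    parCorr U X Y = c * ‖εX‖ / Real.sqrt (‖εY‖ ^ 2 + c ^ 2 * ‖εX‖ ^ 2) := by
  have hεXU : ∀ i, ⟪U i, εX⟫ = 0 := by
    subst hU
    intro i
    refine Fin.addCases (fun j => ?_) (fun j => ?_) i
    · simpa using hNoSidepath j
    · simpa [real_inner_comm] using hεXZ j
  have hεYU : ∀ i, ⟪U i, εY⟫ = 0 := by
    subst hU
    intro i
    refine Fin.addCases (fun j => ?_) (fun j => ?_) i
    · simpa [real_inner_comm] using hεYW j
    · simpa [real_inner_comm] using hεYZ j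
  have hXU : regResidual U X = εX := by
    have h : X = (∑ i, Fin.append (0 : Fin q → ℝ) A i • U i) + εX := by
      simp [hX, hU, Fin.sum_univ_add]
    rw [h]
    exact regResidual_sum_add U hGram _ _ hεXU
  have hYU : regResidual U Y = c • εX + εY := by
    -- Substituting the equation for `X` into that for `Y` gives coefficients `B` on `W`
    -- and `c • A` on `Z`.
    have h : Y = (∑ i, Fin.append B (c • A) i • U i) + (c • εX + εY) := by
      simp only [hY, hX, hU, Fin.sum_univ_add, Fin.append_left, Fin.append_right,
        Pi.smul_apply, smul_eq_mul, mul_smul, smul_add, Finset.smul_sum]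
      abel
    rw [h]
    refine regResidual_sum_add U hGram _ _ fun i => ?_
    simp [inner_add_right, inner_smul_right, hεXU, hεYU]
  have hinner : ⟪c • εX + εY, εX⟫ = c * ‖εX‖ ^ 2 := by
    simp [inner_add_left, inner_smul_left, hεYX]
  have hnorm : ‖c • εX + εY‖ = Real.sqrt (‖εY‖ ^ 2 + c ^ 2 * ‖εX‖ ^ 2) := by
    rw [← Real.sqrt_sq (norm_nonneg (c • εX + εY)), norm_add_sq_real, inner_smul_left,
      real_inner_comm, hεYX, norm_smul, mul_pow, Real.norm_eq_abs, sq_abs]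
    congr 1
    ring
  have hpos : 0 < Real.sqrt (‖εY‖ ^ 2 + c ^ 2 * ‖εX‖ ^ 2) := Real.sqrt_pos.2 (by positivity)
  rw [parCorr, hXU, hYU, hinner, hnorm]
  field_simp
end

section
/- Residuals equal the innovations in the absence of sidepaths: Under the autoregressive model hypotheses, assume additionally that ⟪W_i, εX⟫ = 0 for all i. Then the regression residuals of X and Y on U are X_U = εX and Y_U = c • εX + εY. (In particular, if the εX's and εY's at different times are mutually orthogonal, the residuals are serially uncorrelated, which underlies the undistorted sampling distribution of the MIT estimator.) -/
/-!
A vector `x = ∑ i, a i • U i + e` with `e` orthogonal to every `U i` satisfies the normal equations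
`⟪U, x⟫ = G(U,U) a`, so invertibility of `G(U,U)` makes `a` the vector of regression coefficients
and `e` the residual (`regResidual_eq_of_decomp`). In the autoregressive model without sidepaths,
`X` has coefficients `(0, A)` with error `εX`, and substituting `X` into the equation of `Y` gives
coefficients `(B, c A)` with error `c • εX + εY`; both errors are orthogonal to `W` and to `Z`.
-/

open Matrix
open scoped RealInnerProductSpace

/-- Uniqueness of the regression decomposition: any splitting of `x` into a linear combination of
the `U i` and a vector orthogonal to them exhibits that vector as the residual. -/
theorem regResidual_eq_of_decomp
    {H : Type*} [NormedAddCommGroup H] [InnerProductSpace ℝ H]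
    {m : ℕ} (U : Fin m → H) (hGram : (gram U U).PosDef) (a : Fin m → ℝ) (x e : H)
    (hx : x = (∑ i, a i • U i) + e) (he : ∀ i, ⟪U i, e⟫ = 0) :
    regResidual U x = e := by
  have hvec : gramVec U x = gram U U *ᵥ a := by
    funext i
    simp [gramVec, _root_.gram, hx, inner_add_right, inner_sum, inner_smul_right, he, mulVec,
      dotProduct, mul_comm]
  have hdet : IsUnit (gram U U).det := (Matrix.isUnit_iff_isUnit_det _).mp hGram.isUnit
  rw [regResidual, hvec, mulVec_mulVec, Matrix.nonsing_inv_mul _ hdet, one_mulVec, hx]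
  abel

/-- **Residuals equal the innovations in the absence of sidepaths.** Under the
autoregressive model hypotheses with `⟪W_i, εX⟫ = 0` for all `i`, the regression
residuals of `X` and `Y` on `U` are `X_U = εX` and `Y_U = c • εX + εY`. -/
theorem residuals_equal_innovations_no_sidepaths
    {H : Type*} [NormedAddCommGroup H] [InnerProductSpace ℝ H]
    {p q : ℕ} (Z : Fin p → H) (W : Fin q → H)
    (A : Fin p → ℝ) (B : Fin q → ℝ) (c : ℝ) (εX εY X Y : H)
    (hX : X = (∑ i, A i • Z i) + εX)
    (hY : Y = c • X + (∑ i, B i • W i) + εY)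
    (hεXZ : ∀ i, ⟪εX, Z i⟫ = 0)
    (hεYW : ∀ i, ⟪εY, W i⟫ = 0)
    (hεYZ : ∀ i, ⟪εY, Z i⟫ = 0)
    (hεYX : ⟪εY, εX⟫ = 0)
    (hNoSidepath : ∀ i, ⟪W i, εX⟫ = 0)
    (U : Fin (q + p) → H) (hU : U = Fin.append W Z)
    (hGram : (gram U U).PosDef) :
    regResidual U X = εX ∧ regResidual U Y = c • εX + εY := by
  subst hU
  have hXU : ∀ i, ⟪Fin.append W Z i, εX⟫ = 0 := by
    intro i
    refine Fin.addCases (fun j => ?_) (fun j => ?_) i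
    · simpa using hNoSidepath j
    · simpa [real_inner_comm] using hεXZ j
  have hYU : ∀ i, ⟪Fin.append W Z i, εY⟫ = 0 := by
    intro i
    refine Fin.addCases (fun j => ?_) (fun j => ?_) i
    · simpa [real_inner_comm] using hεYW j
    · simpa [real_inner_comm] using hεYZ j
  constructor
  · refine regResidual_eq_of_decomp _ hGram (Fin.append (fun _ => 0) A) X εX ?_ hXU
    simp [Fin.sum_univ_add, hX]
  · refine regResidual_eq_of_decomp _ hGram (Fin.append B (fun i => c * A i)) Y _ ?_ ?_
    · simp only [Fin.sum_univ_add, Fin.append_left, Fin.append_right, hY, hX, smul_add,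
        Finset.smul_sum, smul_smul]
      abel
    · intro i
      simp [inner_add_right, inner_smul_right, hXU, hYU]
end

section
/- Sidepath Schur complement computation (appendix): Under the sidepath model hypotheses, the Schur complement of the single intermediate variable W given Z is the scalar S_Z = ⟪W,W⟫ − G({W},Z)·G(Z,Z)⁻¹·G(Z,{W}) = d²·σX² + σW², the sidepath covariance is ⟪W, εX⟫ = d·σX², and hence the quadratic form equals ⟪εX, W⟫·S_Z⁻¹·⟪W, εX⟫ = d²·σX⁴ / (d²·σX² + σW²). -/
/-!
Write `W = ∑ (d A i) • Z i + e` with `e = d • εX + εW` orthogonal to every `Z i`. For any such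
decomposition the Schur complement of `W` given `Z` is `⟪e, e⟫`
(`schur_complement_eq_inner_residual`), because the regression coefficients `G(Z,Z)⁻¹ G(Z,W)` are
exactly `d A`. Since `εX ⟂ εW`, this equals `d² ‖εX‖² + ‖εW‖²`, and the other two identities follow
from `⟪W, εX⟫ = ⟪e, εX⟫ = d ‖εX‖²`.
-/

open Matrix
open scoped RealInnerProductSpace

/-- If `W` is a linear combination of the `Z i` plus a residual `e` orthogonal to all of them, then
the Schur complement of `W` given `Z` is the squared norm of the residual. -/
lemma schur_complement_eq_inner_residual
    {H : Type*} [NormedAddCommGroup H] [InnerProductSpace ℝ H]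
    {p : ℕ} (Z : Fin p → H) (a : Fin p → ℝ) (e W : H)
    (hW : W = (∑ i, a i • Z i) + e) (he : ∀ i, ⟪e, Z i⟫ = 0)
    (hdet : IsUnit (gram Z Z).det) :
    ⟪W, W⟫ - (fun i => ⟪W, Z i⟫) ⬝ᵥ ((gram Z Z)⁻¹ *ᵥ fun i => ⟪Z i, W⟫) = ⟪e, e⟫ := by
  have hZW : (fun i => ⟪Z i, W⟫) = gram Z Z *ᵥ a := by
    funext i
    rw [hW, inner_add_right, inner_sum, real_inner_comm e, he, add_zero]
    simp only [Matrix.mulVec, dotProduct, _root_.gram, real_inner_smul_right, mul_comm]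
  have hsum : (fun i => ⟪W, Z i⟫) ⬝ᵥ a = ⟪W, ∑ i, a i • Z i⟫ := by
    simp only [dotProduct, inner_sum, real_inner_smul_right, mul_comm]
  have hPe : ⟪∑ i, a i • Z i, e⟫ = 0 := by
    rw [real_inner_comm, inner_sum]
    simp [real_inner_smul_right, he]
  rw [hZW, Matrix.mulVec_mulVec, Matrix.nonsing_inv_mul _ hdet, Matrix.one_mulVec, hsum,
    ← inner_sub_right]
  have hres : W - ∑ i, a i • Z i = e := by rw [hW, add_sub_cancel_left]
  rw [hres, hW, inner_add_left, hPe, zero_add]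

/-- **Sidepath Schur complement computation (appendix).** Under the sidepath
model hypotheses, the scalar Schur complement of the single intermediate
variable `W` given `Z` is `S_Z = d²σX² + σW²`, the sidepath covariance is
`⟪W, εX⟫ = d·σX²`, and the quadratic form is `d²σX⁴ / (d²σX² + σW²)`. -/
theorem sidepath_schur_complement
    {H : Type*} [NormedAddCommGroup H] [InnerProductSpace ℝ H]
    {p : ℕ} (Z : Fin p → H) (A : Fin p → ℝ) (c d b : ℝ)
    (εX εW εY X W Y : H)
    (hX : X = (∑ i, A i • Z i) + εX)
    (hW : W = d • X + εW)
    (hY : Y = c • X + b • W + εY)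
    (hεXZ : ∀ i, ⟪εX, Z i⟫ = 0)
    (hεWZ : ∀ i, ⟪εW, Z i⟫ = 0)
    (hεWX : ⟪εW, εX⟫ = 0)
    (hεYX : ⟪εY, εX⟫ = 0)
    (hεYW : ⟪εY, εW⟫ = 0)
    (hεYZ : ∀ i, ⟪εY, Z i⟫ = 0)
    (hGram : (gram Z Z).PosDef)
    (SZ : ℝ)
    (hSZ : SZ = ⟪W, W⟫ -
        (fun i => ⟪W, Z i⟫) ⬝ᵥ ((gram Z Z)⁻¹ *ᵥ fun i => ⟪Z i, W⟫)) :
    SZ = d ^ 2 * ‖εX‖ ^ 2 + ‖εW‖ ^ 2 ∧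
    ⟪W, εX⟫ = d * ‖εX‖ ^ 2 ∧
    ⟪εX, W⟫ * SZ⁻¹ * ⟪W, εX⟫ =
      d ^ 2 * ‖εX‖ ^ 4 / (d ^ 2 * ‖εX‖ ^ 2 + ‖εW‖ ^ 2) := by
  have hWd : W = (∑ i, (d * A i) • Z i) + (d • εX + εW) := by
    rw [hW, hX, smul_add, Finset.smul_sum, add_assoc]
    simp only [smul_smul]
  have he : ∀ i, ⟪d • εX + εW, Z i⟫ = 0 := fun i => by
    rw [inner_add_left, real_inner_smul_left, hεXZ, hεWZ, mul_zero, add_zero]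
  have hS : SZ = d ^ 2 * ‖εX‖ ^ 2 + ‖εW‖ ^ 2 := by
    rw [hSZ, schur_complement_eq_inner_residual Z (fun i => d * A i) _ W hWd he
      hGram.det_pos.ne'.isUnit]
    have hXW : ⟪εX, εW⟫ = 0 := by rw [real_inner_comm, hεWX]
    rw [inner_add_left, inner_add_right, inner_add_right]
    simp only [real_inner_smul_left, real_inner_smul_right, hεWX, hXW]
    simp only [real_inner_self_eq_norm_sq]
    ring
  have hC : ⟪W, εX⟫ = d * ‖εX‖ ^ 2 := by
    have hP : ⟪∑ i, (d * A i) • Z i, εX⟫ = 0 := by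
      rw [real_inner_comm, inner_sum]
      simp [real_inner_smul_right, hεXZ]
    rw [hWd, inner_add_left, hP, inner_add_left, real_inner_smul_left, hεWX,
      real_inner_self_eq_norm_sq]
    ring
  refine ⟨hS, hC, ?_⟩
  rw [real_inner_comm, hC, hS]
  ring
end

section
/- MIT in the presence of a sidepath (Section 4.3 example): Under the sidepath model hypotheses with σX > 0, σW > 0, σY > 0, let U : Fin (1+p) → H be the concatenation of the single variable W with the family Z, and assume G(U,U) is positive definite. Then the partial correlation of X and Y given U equals ρ(X;Y|U) = c·σW·σX / √(c²·σW²·σX² + (σW² + d²·σX²)·σY²). In particular, the MIT then depends not only on the coupling coefficient c but also on the sidepath coefficient d and the residual variance of W given Z. -/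
/-!
The regression residual of `X` on `U` is characterised by two properties: it is orthogonal to every
`U i`, and it differs from `X` by a linear combination of the `U i` (`regResidual_eq`). With
`s = σW² + d²σX²`, the part of `X` orthogonal to `Z` is `εX` and that of `W` is `d εX + εW`, so
the residual of `X` on `(W, Z)` is `r = εX - (d σX² / s) (d εX + εW)`, with `‖r‖² = σX²σW² / s`.
Since `Y = c X + b W + εY` with `εY` orthogonal to everything, the residual of `Y` is `c r + εY`,
and the partial correlation is `c ‖r‖ / √(c²‖r‖² + σY²)`, which is the claimed expression.
-/

open Matrix
open scoped RealInnerProductSpace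

/-- A vector orthogonal to `U` that differs from `X` by a combination of `U` is the regression
residual of `X`: the coefficients solve the normal equations. -/
theorem regResidual_eq {H : Type*} [NormedAddCommGroup H] [InnerProductSpace ℝ H]
    {m : ℕ} (U : Fin m → H) (X r : H) (a : Fin m → ℝ) (hdet : IsUnit (gram U U).det)
    (hX : X = ∑ i, a i • U i + r) (hr : ∀ i, ⟪U i, r⟫ = 0) :
    regResidual U X = r := by
  have hv : gramVec U X = gram U U *ᵥ a := by
    funext i
    simp only [gramVec, _root_.gram, mulVec, dotProduct]
    rw [hX, inner_add_right, hr i, inner_sum, add_zero]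
    exact Finset.sum_congr rfl fun j _ => by rw [inner_smul_right, mul_comm]
  rw [regResidual, hv, mulVec_mulVec, nonsing_inv_mul _ hdet, one_mulVec]
  nth_rewrite 1 [hX]
  exact add_sub_cancel_left _ _

/-- **MIT in the presence of a sidepath (Section 4.3 example).** Under the
sidepath model hypotheses, with `U` the concatenation of `W` with `Z`,
`ρ(X;Y|U) = c·σW·σX / √(c²σW²σX² + (σW² + d²σX²)·σY²)`. -/
theorem mit_with_sidepath
    {H : Type*} [NormedAddCommGroup H] [InnerProductSpace ℝ H]
    {p : ℕ} (Z : Fin p → H) (A : Fin p → ℝ) (c d b : ℝ)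
    (εX εW εY X W Y : H)
    (hX : X = (∑ i, A i • Z i) + εX)
    (hW : W = d • X + εW)
    (hY : Y = c • X + b • W + εY)
    (hεXZ : ∀ i, ⟪εX, Z i⟫ = 0)
    (hεWZ : ∀ i, ⟪εW, Z i⟫ = 0)
    (hεWX : ⟪εW, εX⟫ = 0)
    (hεYX : ⟪εY, εX⟫ = 0)
    (hεYW : ⟪εY, εW⟫ = 0)
    (hεYZ : ∀ i, ⟪εY, Z i⟫ = 0)
    (hσX : 0 < ‖εX‖) (hσW : 0 < ‖εW‖) (hσY : 0 < ‖εY‖)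
    (U : Fin (1 + p) → H) (hU : U = Fin.append ![W] Z)
    (hGram : (gram U U).PosDef) :
    parCorr U X Y = c * ‖εW‖ * ‖εX‖ /
      Real.sqrt (c ^ 2 * ‖εW‖ ^ 2 * ‖εX‖ ^ 2 +
        (‖εW‖ ^ 2 + d ^ 2 * ‖εX‖ ^ 2) * ‖εY‖ ^ 2) := by
  have hdet : IsUnit (gram U U).det := (isUnit_iff_isUnit_det _).mp hGram.isUnit
  have hs : 0 < ‖εW‖ ^ 2 + d ^ 2 * ‖εX‖ ^ 2 := by positivity
  set s : ℝ := ‖εW‖ ^ 2 + d ^ 2 * ‖εX‖ ^ 2 with hsdef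
  set t : ℝ := d * ‖εX‖ ^ 2 / s with ht
  have hts : t * s = d * ‖εX‖ ^ 2 := by rw [ht]; field_simp
  set r : H := εX - t • (d • εX + εW) with hr
  have hεXW : ⟪εX, εW⟫ = 0 := by rw [real_inner_comm]; exact hεWX
  -- `W` splits into its regression on `Z` and the innovation `d εX + εW`.
  have hW' : W = d • (∑ i, A i • Z i) + (d • εX + εW) := by
    rw [hW, hX, smul_add, add_assoc]
  have hsum : ∀ e : H, (∀ i, ⟪e, Z i⟫ = 0) → ⟪∑ i, A i • Z i, e⟫ = 0 := by
    intro e he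
    rw [real_inner_comm, inner_sum]
    exact Finset.sum_eq_zero fun i _ => by rw [inner_smul_right, he i, mul_zero]
  have hrZ : ∀ i, ⟪r, Z i⟫ = 0 := by
    intro i
    simp [hr, inner_sub_left, inner_add_left, inner_smul_left, hεXZ i, hεWZ i]
  have hWr : ⟪W, r⟫ = 0 := by
    rw [hW', inner_add_left, inner_smul_left, hsum r hrZ, hr]
    simp only [inner_sub_right, inner_add_left, inner_add_right, inner_smul_left,
      inner_smul_right, real_inner_self_eq_norm_sq, hεXW, hεWX, conj_trivial]
    linear_combination -hts
  have hWY : ⟪W, εY⟫ = 0 := by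
    rw [hW', inner_add_left, inner_smul_left, hsum εY hεYZ]
    simp [real_inner_comm εY, inner_add_right, inner_smul_right, hεYX, hεYW]
  have hYr : ⟪εY, r⟫ = 0 := by
    simp [hr, inner_sub_right, inner_add_right, inner_smul_right, hεYX, hεYW]
  have hrr : ⟪r, r⟫ = ‖εX‖ ^ 2 * ‖εW‖ ^ 2 / s := by
    rw [eq_div_iff hs.ne', hr]
    simp only [inner_sub_left, inner_sub_right, inner_add_left, inner_add_right, inner_smul_left,
      inner_smul_right, real_inner_self_eq_norm_sq, hεXW, hεWX, conj_trivial]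
    linear_combination (t * s - d * ‖εX‖ ^ 2) * hts
  have hUorth : ∀ e : H, ⟪W, e⟫ = 0 → (∀ i, ⟪e, Z i⟫ = 0) → ∀ i, ⟪U i, e⟫ = 0 := by
    intro e h1 h2 i
    rw [hU]
    refine Fin.addCases (fun j => ?_) (fun j => ?_) i
    · rw [Fin.append_left]; simpa using h1
    · rw [Fin.append_right, real_inner_comm]; exact h2 j
  have hUsum : ∀ (w : ℝ) (z : Fin p → ℝ),
      ∑ i, (Fin.append ![w] z) i • U i = w • W + ∑ i, z i • Z i := by
    intro w z
    rw [hU, Fin.sum_univ_add]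
    simp
  have hXU : regResidual U X = r := by
    refine regResidual_eq U X r (Fin.append ![t] fun i => (1 - t * d) * A i) hdet ?_
      (hUorth r hWr hrZ)
    rw [hUsum]
    simp only [mul_smul, ← Finset.smul_sum]
    rw [hW', hr, hX]
    module
  have hYU : regResidual U Y = c • r + εY := by
    refine regResidual_eq U Y _ (Fin.append ![c * t + b] fun i => (c * (1 - t * d)) * A i) hdet ?_
      (hUorth _ ?_ fun i => ?_)
    · rw [hUsum]
      simp only [mul_smul _ (A _), ← Finset.smul_sum]
      rw [hY, hW', hr, hX]
      module
    · rw [inner_add_right, inner_smul_right, hWr, hWY]; simp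
    · rw [inner_add_left, inner_smul_left, hrZ i, hεYZ i]; simp
  have hinner : ⟪c • r + εY, r⟫ = c * ‖r‖ ^ 2 := by
    rw [inner_add_left, inner_smul_left, hYr, real_inner_self_eq_norm_sq]; simp
  have hnormY : ‖c • r + εY‖ ^ 2 = c ^ 2 * ‖r‖ ^ 2 + ‖εY‖ ^ 2 := by
    rw [← real_inner_self_eq_norm_sq, inner_add_right, inner_smul_right, hinner, inner_add_left,
      inner_smul_left, real_inner_comm, hYr, real_inner_self_eq_norm_sq]
    simp; ring
  rw [real_inner_self_eq_norm_sq] at hrr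
  have hrpos : 0 < ‖r‖ := by
    have : 0 < ‖r‖ ^ 2 := by rw [hrr]; positivity
    exact lt_of_le_of_ne (norm_nonneg _) fun h => by simp [← h] at this
  have hrn : ‖r‖ * √s = ‖εX‖ * ‖εW‖ := by
    rw [← sq_eq_sq₀ (by positivity) (by positivity), mul_pow, Real.sq_sqrt hs.le, hrr]
    field_simp
  have hden : √(c ^ 2 * ‖εW‖ ^ 2 * ‖εX‖ ^ 2 + s * ‖εY‖ ^ 2) = ‖c • r + εY‖ * √s := by
    rw [Real.sqrt_eq_iff_mul_self_eq (by positivity) (by positivity), ← sq, mul_pow, hnormY,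
      Real.sq_sqrt hs.le, hrr]
    field_simp
  have hYpos : 0 < ‖c • r + εY‖ := by
    have : 0 < ‖c • r + εY‖ ^ 2 := by rw [hnormY]; positivity
    exact lt_of_le_of_ne (norm_nonneg _) fun h => by simp [← h] at this
  have hsq : 0 < √s := Real.sqrt_pos.mpr hs
  rw [parCorr, hXU, hYU, hinner, hden, div_eq_div_iff (by positivity) (by positivity)]
  linear_combination c * ‖r‖ * ‖c • r + εY‖ * hrn
end

section
/- Recovery of the innovations from the autoregressive recursion: Under the MA(∞) setup, assume additionally that Ψ 0 = 1 (the identity matrix) and that there are Φ : ℕ → Matrix (Fin N) (Fin N) ℝ and p ∈ ℕ with Φ s = 0 for s > p such that Ψ n = Σ_{s=1}^{n} (Φ s) · (Ψ (n−s)) for every n ≥ 1. Then for every t ∈ ℤ and index j, X t j − Σ_{s=1}^{p} Σ_{k} (Φ s) j k • X (t−s) k = ε t j; that is, the process satisfies the vector autoregressive equations with innovations ε. -/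
/-!
Substituting `n ↦ n + s` rewrites the series for `X (t - s) k` as a series in the same innovations
`ε (t - n) r`, with coefficients `Ψ (n - s) k r`; the extra terms `n < s` vanish because
`Ψ` is zero at negative arguments (`hasSum_shift`). Hence the left-hand side of the autoregressive
equation is the sum of one series, whose coefficient at `ε (t - n) r` is the `(j, r)` entry of
`Ψ n - ∑ s ∈ Icc 1 p, Φ s * Ψ (n - s)`. The recursion makes this matrix `1` for `n = 0` and `0`
otherwise (`sum_Icc_order_eq`), so that only `ε t j` survives.
-/

open scoped RealInnerProductSpace

/-- The moving-average series at time `t - s`, reindexed by the lag relative to `t`. -/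
lemma hasSum_shift {H : Type*} [NormedAddCommGroup H] [InnerProductSpace ℝ H] {N : ℕ}
    {ε : ℤ → Fin N → H} {Ψ : ℤ → Matrix (Fin N) (Fin N) ℝ}
    (hΨneg : ∀ n : ℤ, n < 0 → Ψ n = 0) {t : ℤ} {s : ℕ} {k : Fin N} {x : H}
    (h : HasSum (fun nr : ℕ × Fin N => (Ψ (nr.1 : ℤ)) k nr.2 • ε (t - s - nr.1) nr.2) x) :
    HasSum (fun nr : ℕ × Fin N => (Ψ ((nr.1 : ℤ) - s)) k nr.2 • ε (t - nr.1) nr.2) x := by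
  have hinj : Function.Injective (fun nr : ℕ × Fin N => (nr.1 + s, nr.2)) := by
    rintro ⟨a, b⟩ ⟨c, d⟩ hab
    simpa using hab
  rw [← hinj.hasSum_iff]
  · convert h using 2 with nr
    have h1 : ((nr.1 + s : ℕ) : ℤ) - s = nr.1 := by push_cast; ring
    have h2 : t - ((nr.1 + s : ℕ) : ℤ) = t - s - nr.1 := by push_cast; ring
    simp only [Function.comp_apply, h1, h2]
  · rintro ⟨n, r⟩ hn
    have hlt : n < s := by
      by_contra hle
      exact hn ⟨(n - s, r), by simp; omega⟩
    simp [hΨneg ((n : ℤ) - s) (by omega)]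

/-- In the convolution `∑ Φ s * Ψ (n - s)` the upper limit `n` may be replaced by the order `p`:
the terms with `s > p` vanish through `Φ`, those with `s > n` through `Ψ`. -/
lemma sum_Icc_order_eq {N : ℕ} {Ψ : ℤ → Matrix (Fin N) (Fin N) ℝ}
    (hΨneg : ∀ n : ℤ, n < 0 → Ψ n = 0) {Φ : ℕ → Matrix (Fin N) (Fin N) ℝ} {p : ℕ}
    (hΦ : ∀ s : ℕ, p < s → Φ s = 0) (n : ℕ) :
    ∑ s ∈ Finset.Icc 1 p, Φ s * Ψ ((n : ℤ) - s) =
      ∑ s ∈ Finset.Icc 1 n, Φ s * Ψ ((n : ℤ) - s) := by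
  rcases le_total p n with h | h
  · refine Finset.sum_subset (Finset.Icc_subset_Icc_right h) fun s hs hs' => ?_
    simp only [Finset.mem_Icc] at hs hs'
    rw [hΦ s (by omega), zero_mul]
  · refine (Finset.sum_subset (Finset.Icc_subset_Icc_right h) fun s hs hs' => ?_).symm
    simp only [Finset.mem_Icc] at hs hs'
    rw [hΨneg _ (by omega), mul_zero]

/-- **Recovery of the innovations from the autoregressive recursion.** Under the
MA(∞) setup with `Ψ(0) = 1` and `Ψ(n) = Σ_{s=1}^{n} Φ(s) Ψ(n−s)` for `n ≥ 1`
(where `Φ(s) = 0` for `s > p`), the process satisfies the vector autoregressive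
equations: `X t j − Σ_{s=1}^{p} Σ_k Φ(s)_{j k} • X(t−s) k = ε t j`. -/
theorem innovations_from_autoregressive_recursion
    {H : Type*} [NormedAddCommGroup H] [InnerProductSpace ℝ H]
    (N : ℕ) (C : Matrix (Fin N) (Fin N) ℝ) (hC : C.IsSymm)
    (ε : ℤ → Fin N → H)
    (hε : ∀ (s t : ℤ) (r u : Fin N),
      ⟪ε s r, ε t u⟫ = if s = t then C r u else 0)
    (Ψ : ℤ → Matrix (Fin N) (Fin N) ℝ)
    (hΨneg : ∀ n : ℤ, n < 0 → Ψ n = 0)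
    (X : ℤ → Fin N → H)
    (hsum : ∀ (t : ℤ) (i : Fin N),
      Summable (fun nr : ℕ × Fin N => (Ψ (nr.1 : ℤ)) i nr.2 • ε (t - nr.1) nr.2))
    (hX : ∀ (t : ℤ) (i : Fin N),
      X t i = ∑' nr : ℕ × Fin N, (Ψ (nr.1 : ℤ)) i nr.2 • ε (t - nr.1) nr.2)
    (hΨ0 : Ψ 0 = 1)
    (Φ : ℕ → Matrix (Fin N) (Fin N) ℝ) (p : ℕ)
    (hΦ : ∀ s : ℕ, p < s → Φ s = 0)
    (hrec : ∀ n : ℕ, 1 ≤ n →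
      Ψ (n : ℤ) = ∑ s ∈ Finset.Icc 1 n, Φ s * Ψ ((n : ℤ) - s)) :
    ∀ (t : ℤ) (j : Fin N),
      X t j - ∑ s ∈ Finset.Icc 1 p, ∑ k, (Φ s) j k • X (t - s) k = ε t j := by
  intro t j
  have hXs : ∀ t i, HasSum
      (fun nr : ℕ × Fin N => (Ψ (nr.1 : ℤ)) i nr.2 • ε (t - nr.1) nr.2) (X t i) := fun t i => by
    rw [hX]
    exact (hsum t i).hasSum
  have hcomb := (hXs t j).sub (hasSum_sum (s := Finset.Icc 1 p) fun s _ =>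
    hasSum_sum (s := Finset.univ) fun k _ =>
      (hasSum_shift hΨneg (hXs (t - s) k)).const_smul ((Φ s) j k))
  have hcoef : ∀ (n : ℕ) (r : Fin N),
      (Ψ (n : ℤ)) j r • ε (t - n) r - ∑ s ∈ Finset.Icc 1 p, ∑ k,
        (Φ s) j k • (Ψ ((n : ℤ) - s)) k r • ε (t - n) r =
      (Ψ (n : ℤ) - ∑ s ∈ Finset.Icc 1 n, Φ s * Ψ ((n : ℤ) - s)) j r • ε (t - n) r := by
    intro n r
    rw [← sum_Icc_order_eq hΨneg hΦ n]
    simp only [Matrix.sub_apply, Matrix.sum_apply, Matrix.mul_apply, sub_smul, Finset.sum_smul,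
      mul_smul]
  simp only [hcoef] at hcomb
  refine hcomb.unique ?_
  convert hasSum_single ((0 : ℕ), j) ?_ using 1
  · simp [hΨ0]
  · rintro ⟨n, r⟩ hne
    rcases Nat.eq_zero_or_pos n with rfl | hn
    · have hjr : j ≠ r := fun h => hne (by rw [h])
      simp [hΨ0, Matrix.one_apply_ne hjr]
    · simp [← hrec n hn]
end

section
/- Lagged covariance recursion (appendix derivation of Γ_{W_i X}): Under the MA(∞) setup with the autoregressive recursion hypotheses (Ψ 0 = 1 and Ψ n = Σ_{s=1}^{n} (Φ s)·(Ψ (n−s)) for n ≥ 1, with Φ s = 0 for s > p), for every t ∈ ℤ, every m ∈ ℤ, and all indices i, j: ⟪X (t+m) i, X t j⟫ = (Ψ m · C) i j + Σ_{s=1}^{p} Σ_{k} (Φ s) j k · ⟪X (t+m) i, X (t−s) k⟫ (with the convention Ψ m = 0 for m < 0). -/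
open scoped RealInnerProductSpace

/-!
Extending the coefficients by `Ψ n = 0` for `n < 0` turns the recursion into the single identity
`Ψ u = 1_{u = 0} + ∑_{s = 1}^p Φ s * Ψ (u - s)` valid for every integer `u`
(`psi_recursion_int`), and makes every `X t i` a sum over all of `ℤ × Fin N`
(`hasSum_int_of_nat`), where time shifts are reindexings. Comparing coefficients of the
innovations gives the autoregressive equation `X t = ε t + ∑_s Φ s X (t - s)`. Pairing it with
`X (t + m) i` yields the claim, because orthogonality of the innovations leaves only the lag-`m`
term in `⟪X (t + m) i, ε t j⟫`, which is `(Ψ m * C) i j`.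
-/

lemma psi_recursion_int {N : ℕ} {Ψ : ℤ → Matrix (Fin N) (Fin N) ℝ}
    (hΨneg : ∀ n : ℤ, n < 0 → Ψ n = 0) (hΨ0 : Ψ 0 = 1)
    {Φ : ℕ → Matrix (Fin N) (Fin N) ℝ} {p : ℕ}
    (hΦ : ∀ s : ℕ, p < s → Φ s = 0)
    (hrec : ∀ n : ℕ, 1 ≤ n →
      Ψ (n : ℤ) = ∑ s ∈ Finset.Icc 1 n, Φ s * Ψ ((n : ℤ) - s)) (u : ℤ) :
    Ψ u = (if u = 0 then 1 else 0) + ∑ s ∈ Finset.Icc 1 p, Φ s * Ψ (u - s) := by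
  rcases le_or_gt u 0 with hu | hu
  · have hz : ∑ s ∈ Finset.Icc 1 p, Φ s * Ψ (u - s) = 0 := by
      refine Finset.sum_eq_zero fun s hs => ?_
      have := (Finset.mem_Icc.1 hs).1
      rw [hΨneg _ (by omega), mul_zero]
    rw [hz, add_zero]
    split_ifs with h
    · rw [h, hΨ0]
    · exact hΨneg u (by omega)
  · lift u to ℕ using hu.le
    rw [if_neg (by omega), zero_add, hrec u (by omega)]
    -- Both ranges can be enlarged to `Icc 1 (max u p)`: beyond `u` the factor `Ψ` vanishes,
    -- beyond `p` the factor `Φ` does.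
    trans ∑ s ∈ Finset.Icc 1 (max u p), Φ s * Ψ ((u : ℤ) - s)
    · refine Finset.sum_subset (Finset.Icc_subset_Icc_right (le_max_left _ _)) fun s hs hs' => ?_
      simp only [Finset.mem_Icc] at hs hs'
      rw [hΨneg _ (by omega), mul_zero]
    · symm
      refine Finset.sum_subset (Finset.Icc_subset_Icc_right (le_max_right _ _)) fun s hs hs' => ?_
      simp only [Finset.mem_Icc] at hs hs'
      rw [hΦ _ (by omega), zero_mul]

lemma hasSum_int_of_nat {H : Type*} [NormedAddCommGroup H] [InnerProductSpace ℝ H]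
    {N : ℕ} {ε : ℤ → Fin N → H} {Ψ : ℤ → Matrix (Fin N) (Fin N) ℝ}
    (hΨneg : ∀ n : ℤ, n < 0 → Ψ n = 0) {t : ℤ} {i : Fin N} {x : H}
    (h : HasSum (fun nr : ℕ × Fin N => (Ψ (nr.1 : ℤ)) i nr.2 • ε (t - nr.1) nr.2) x) :
    HasSum (fun ur : ℤ × Fin N => (Ψ ur.1) i ur.2 • ε (t - ur.1) ur.2) x := by
  have hinj : Function.Injective (fun nr : ℕ × Fin N => ((nr.1 : ℤ), nr.2)) := by
    rintro ⟨a, b⟩ ⟨c, d⟩ h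
    simpa using h
  refine (hinj.hasSum_iff ?_).1 h
  rintro ⟨u, r⟩ hu
  have : u < 0 := by
    by_contra hc
    exact hu ⟨(u.toNat, r), by simp; omega⟩
  simp [hΨneg u this]

/-- **Lagged covariance recursion (appendix derivation of `Γ_{W_i X}`).** Under
the MA(∞) setup with the autoregressive recursion hypotheses, for all `t, m, i, j`:
`⟪X(t+m) i, X t j⟫ = (Ψ(m) C)_{i j} + Σ_{s=1}^{p} Σ_k Φ(s)_{j k} ⟪X(t+m) i, X(t−s) k⟫`
(with `Ψ(m) = 0` for `m < 0`). -/
theorem lagged_covariance_recursion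
    {H : Type*} [NormedAddCommGroup H] [InnerProductSpace ℝ H]
    (N : ℕ) (C : Matrix (Fin N) (Fin N) ℝ) (hC : C.IsSymm)
    (ε : ℤ → Fin N → H)
    (hε : ∀ (s t : ℤ) (r u : Fin N),
      ⟪ε s r, ε t u⟫ = if s = t then C r u else 0)
    (Ψ : ℤ → Matrix (Fin N) (Fin N) ℝ)
    (hΨneg : ∀ n : ℤ, n < 0 → Ψ n = 0)
    (X : ℤ → Fin N → H)
    (hsum : ∀ (t : ℤ) (i : Fin N),
      Summable (fun nr : ℕ × Fin N => (Ψ (nr.1 : ℤ)) i nr.2 • ε (t - nr.1) nr.2))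
    (hX : ∀ (t : ℤ) (i : Fin N),
      X t i = ∑' nr : ℕ × Fin N, (Ψ (nr.1 : ℤ)) i nr.2 • ε (t - nr.1) nr.2)
    (hΨ0 : Ψ 0 = 1)
    (Φ : ℕ → Matrix (Fin N) (Fin N) ℝ) (p : ℕ)
    (hΦ : ∀ s : ℕ, p < s → Φ s = 0)
    (hrec : ∀ n : ℕ, 1 ≤ n →
      Ψ (n : ℤ) = ∑ s ∈ Finset.Icc 1 n, Φ s * Ψ ((n : ℤ) - s)) :
    ∀ (t m : ℤ) (i j : Fin N),
      ⟪X (t + m) i, X t j⟫ = (Ψ m * C) i j +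
        ∑ s ∈ Finset.Icc 1 p, ∑ k, (Φ s) j k * ⟪X (t + m) i, X (t - s) k⟫ := by
  intro t m i j
  have hS : ∀ (t : ℤ) (i : Fin N),
      HasSum (fun ur : ℤ × Fin N => (Ψ ur.1) i ur.2 • ε (t - ur.1) ur.2) (X t i) := by
    intro t i
    refine hasSum_int_of_nat hΨneg ?_
    rw [hX]
    exact (hsum t i).hasSum
  have hshift : ∀ (s : ℕ) (k : Fin N),
      HasSum (fun ur : ℤ × Fin N => (Ψ (ur.1 - s)) k ur.2 • ε (t - ur.1) ur.2)
        (X (t - s) k) := by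
    intro s k
    rw [← ((Equiv.addRight (s : ℤ)).prodCongr (Equiv.refl (Fin N))).hasSum_iff]
    convert hS (t - s) k using 2 with ur
    simp only [Function.comp_apply, Equiv.prodCongr_apply, Prod.map_fst, Prod.map_snd,
      Equiv.coe_addRight, Equiv.refl_apply, add_sub_cancel_right]
    rw [sub_sub, add_comm (s : ℤ)]
  have hAR : X t j = ε t j + ∑ s ∈ Finset.Icc 1 p, ∑ k, (Φ s) j k • X (t - s) k := by
    have h0 : HasSum (fun ur : ℤ × Fin N =>
        ((if ur.1 = 0 then 1 else 0 : Matrix (Fin N) (Fin N) ℝ) j ur.2) • ε (t - ur.1) ur.2)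
        (ε t j) := by
      convert hasSum_single ((0 : ℤ), j) ?_ using 1
      · simp
      · rintro ⟨u, r⟩ hne
        by_cases hu : u = 0
        · have hr : j ≠ r := fun h => hne (by rw [hu, h])
          simp [hu, Matrix.one_apply_ne hr]
        · simp [hu]
    have h1 := h0.add (hasSum_sum (s := Finset.Icc 1 p) fun s _ =>
      hasSum_sum (s := Finset.univ) fun k _ => (hshift s k).const_smul ((Φ s) j k))
    refine (hS t j).unique ?_
    convert h1 using 2 with ur
    rw [psi_recursion_int hΨneg hΨ0 hΦ hrec ur.1]
    simp only [Matrix.add_apply, Matrix.sum_apply, Matrix.mul_apply, add_smul,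
      Finset.sum_smul, mul_smul]
  have hinn : ⟪X (t + m) i, ε t j⟫ = (Ψ m * C) i j := by
    have h := (hS (t + m) i).mapL (innerSL ℝ (ε t j))
    simp only [innerSL_apply_apply, inner_smul_right, hε] at h
    -- Only the terms with `u = m` survive, and they form the finite sum defining `Ψ m * C`.
    have hfin := hasSum_sum_of_ne_finset_zero
      (f := fun ur : ℤ × Fin N =>
        Ψ ur.1 i ur.2 * if t = t + m - ur.1 then C j ur.2 else 0)
      (s := ({m} : Finset ℤ) ×ˢ Finset.univ) (L := .unconditional _) (by
        rintro ⟨u, r⟩ hu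
        have : u ≠ m := by simpa [eq_comm] using hu
        rw [if_neg (by dsimp only; omega), mul_zero])
    rw [real_inner_comm, h.unique hfin]
    simp [Matrix.mul_apply, hC.apply]
  conv_lhs => rw [hAR]
  simp only [inner_add_right, inner_sum, inner_smul_right, hinn]
end
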